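/- Let R be a discrete valuation ring with normalized additive valuation v (with value group ℤ) and residue field κ. Let n, k, ℓ be integers with 0 ≤ ℓ < k ≤ n/2. Let φ ∈ R[x] be a monic polynomial whose image in κ[x] is irreducible. Let f ∈ R[x] be a monic polynomial not divisible by φ(x) in R[x], with φ-expansion f = Σ_{i=0}^{n} f_i(x)·φ(x)^i and f_n(x) ≠ 0. For nonzero g ∈ R[x], write v^x(g) for the minimum of v over the coefficients of g. Assume: (1) v^x(f_i) > 0 for all 0 ≤ i ≤ n−ℓ−1; (2) f_0 ≠ 0 and for every index j with 1 ≤ j ≤ n and f_j ≠ 0 one has k·(v^x(f_0) − v^x(f_j)) < j. Let a_0(x), …, a_n(x) ∈ R[x] satisfy: (i) deg a_i < deg φ − deg f_i for 0 ≤ i ≤ n; (ii) v^x(a_0) = 0; (iii) the leading coefficient of a_n is a unit of R. Then the polynomial Σ_{i=0}^{n} a_i(x)·f_i(x)·φ(x)^i has no factor in R[x] whose degree lies in the interval [(ℓ+1)·deg φ, (k+1)·deg φ). -/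

import Mathlib

open Polynomial

/-- The Gaussian valuation `v^x` of a polynomial over a local ring `R`: the largest `m`
such that every coefficient lies in the `m`-th power of the maximal ideal. For a discrete
valuation ring this is the minimum of the valuations of the coefficients. -/
noncomputable def vxDVR (R : Type*) [CommRing R] [IsLocalRing R] (g : Polynomial R) : ℕ :=
  sSup {m : ℕ | ∀ j, g.coeff j ∈ (IsLocalRing.maximalIdeal R) ^ m}

/-!
For `p = ∑ pᵢ φⁱ` with `v` the Gauss valuation, consider the weights `k * v(pᵢ) + i` and the largest
index at which they are minimal (the right end of the edge of slope `-1 / k` of the `φ`-Newton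
polygon). Because `φ` stays prime modulo `π`, reducing a product `pᵢ qⱼ` modulo `φ` does not raise
its valuation, so this index is additive in products, as in Gauss's lemma. Condition (2) says that
the index of `F = ∑ aᵢ fᵢ φⁱ` is `0`; hence it is `0` for every factor `g` of `F`.

Modulo `π`, condition (1) makes `F` divisible by `φ ^ (n - ℓ)`. If `deg g ≥ (ℓ + 1) deg φ`, the
cofactor of `g` has too small a degree to absorb this power, so `φ ∣ g` modulo `π` and the weight of
`g` at `0` is at least `k`. If moreover `deg g < (k + 1) deg φ`, then some `gₜ` with `t ≤ k` is
nonzero modulo `π`; its weight is `t ≤ k`, so the index of `g` is positive, a contradiction.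
-/

section PhiExpansion

variable {R : Type*} [CommRing R] {φ : R[X]}

theorem degree_sum_mul_pow_lt (hφ : φ.Monic) {c : ℕ → R[X]} {N : ℕ}
    (hc : ∀ i < N, (c i).degree < φ.degree) :
    (∑ i ∈ Finset.range N, c i * φ ^ i).degree < ((N * φ.natDegree : ℕ) : WithBot ℕ) := by
  nontriviality R
  refine (degree_sum_le _ _).trans_lt ((Finset.sup_lt_iff (WithBot.bot_lt_coe _)).2 fun i hi => ?_)
  have hiN : i < N := Finset.mem_range.1 hi
  calc (c i * φ ^ i).degree = (c i).degree + (φ ^ i).degree := (hφ.pow i).degree_mul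
    _ < φ.degree + (φ ^ i).degree :=
      WithBot.add_lt_add_right (degree_ne_bot.2 (hφ.pow i).ne_zero) (hc i hiN)
    _ = (((i + 1) * φ.natDegree : ℕ) : WithBot ℕ) := by
      rw [degree_eq_natDegree hφ.ne_zero, degree_eq_natDegree (hφ.pow i).ne_zero,
        hφ.natDegree_pow, ← Nat.cast_add, add_one_mul, add_comm]
    _ ≤ _ := Nat.cast_le.2 (Nat.mul_le_mul_right _ hiN)

theorem leadingCoeff_sum_mul_pow (hφ : φ.Monic) {c : ℕ → R[X]} {n : ℕ}
    (hc : ∀ i < n, (c i).degree < φ.degree) (hn : c n ≠ 0) :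
    (∑ i ∈ Finset.range (n + 1), c i * φ ^ i).leadingCoeff = (c n).leadingCoeff := by
  nontriviality R
  have hlt : (∑ i ∈ Finset.range n, c i * φ ^ i).degree < (c n * φ ^ n).degree := by
    refine (degree_sum_mul_pow_lt hφ hc).trans_le ?_
    rw [(hφ.pow n).degree_mul, degree_eq_natDegree hn,
      degree_eq_natDegree (hφ.pow n).ne_zero, hφ.natDegree_pow, ← Nat.cast_add, Nat.cast_le]
    exact Nat.le_add_left _ _
  rw [Finset.sum_range_succ, leadingCoeff_add_of_degree_lt hlt, leadingCoeff_mul_monic (hφ.pow n)]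

/-- Division by a monic polynomial as a linear map. For `φ` not monic it is zero, the convention
of `/ₘ`. -/
noncomputable def divByMonicLinear (φ : R[X]) : R[X] →ₗ[R] R[X] where
  toFun p := p /ₘ φ
  map_add' p q := by
    by_cases hφ : φ.Monic
    · nontriviality R
      refine (div_modByMonic_unique _ (p %ₘ φ + q %ₘ φ) hφ ⟨?_, ?_⟩).1
      · linear_combination modByMonic_add_div p φ + modByMonic_add_div q φ
      · exact (degree_add_le _ _).trans_lt
          (max_lt (degree_modByMonic_lt _ hφ) (degree_modByMonic_lt _ hφ))
    · simp only [divByMonic_eq_of_not_monic _ hφ, add_zero]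
  map_smul' a p := by
    by_cases hφ : φ.Monic
    · nontriviality R
      refine (div_modByMonic_unique _ (a • (p %ₘ φ)) hφ ⟨?_, ?_⟩).1
      · rw [RingHom.id_apply, mul_smul_comm, ← smul_add, modByMonic_add_div]
      · exact (degree_smul_le _ _).trans_lt (degree_modByMonic_lt _ hφ)
    · simp only [divByMonic_eq_of_not_monic _ hφ, smul_zero]

/-- The `i`-th coefficient of the `φ`-expansion of a polynomial, as a linear map: divide `i` times
by `φ`, then take the remainder. -/
noncomputable def phiDigit (φ : R[X]) (i : ℕ) : R[X] →ₗ[R] R[X] :=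
  modByMonicHom φ ∘ₗ divByMonicLinear φ ^ i

theorem phiDigit_zero_apply (p : R[X]) : phiDigit φ 0 p = p %ₘ φ := rfl

theorem phiDigit_succ_apply (i : ℕ) (p : R[X]) :
    phiDigit φ (i + 1) p = phiDigit φ i (p /ₘ φ) := by
  rw [phiDigit, pow_succ]
  rfl

theorem degree_phiDigit_lt [Nontrivial R] (hφ : φ.Monic) (i : ℕ) (p : R[X]) :
    (phiDigit φ i p).degree < φ.degree :=
  degree_modByMonic_lt _ hφ

theorem phiDigit_add_mul_pow (hφ : φ.Monic) (i m : ℕ) (p : R[X]) :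
    phiDigit φ (i + m) (p * φ ^ i) = phiDigit φ m p := by
  induction i with
  | zero => rw [zero_add, pow_zero, mul_one]
  | succ i ih =>
    rw [add_right_comm, phiDigit_succ_apply, pow_succ, ← mul_assoc, mul_comm _ φ,
      mul_divByMonic_cancel_left _ hφ, ih]

theorem phiDigit_mul_pow_self (hφ : φ.Monic) (i : ℕ) (p : R[X]) :
    phiDigit φ i (p * φ ^ i) = p %ₘ φ :=
  phiDigit_add_mul_pow hφ i 0 p

theorem phiDigit_mul_pow_of_lt (hφ : φ.Monic) {m i : ℕ} (hmi : m < i) (p : R[X]) :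
    phiDigit φ m (p * φ ^ i) = 0 := by
  obtain ⟨j, rfl⟩ := Nat.exists_eq_add_of_lt hmi
  rw [add_assoc, add_comm, pow_add, ← mul_assoc, phiDigit_mul_pow_self hφ,
    modByMonic_eq_zero_iff_dvd hφ, pow_succ, ← mul_assoc]
  exact dvd_mul_left _ _

theorem phiDigit_of_degree_lt (hφ : φ.Monic) {p : R[X]} (hp : p.degree < φ.degree) (m : ℕ) :
    phiDigit φ m p = if m = 0 then p else 0 := by
  nontriviality R
  cases m with
  | zero => exact (modByMonic_eq_self_iff hφ).2 hp
  | succ m => rw [phiDigit_succ_apply, (divByMonic_eq_zero_iff hφ).2 hp, map_zero,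
      if_neg m.succ_ne_zero]

theorem phiDigit_sum_mul_pow (hφ : φ.Monic) {c : ℕ → R[X]} {N : ℕ}
    (hc : ∀ i < N, (c i).degree < φ.degree) (m : ℕ) :
    phiDigit φ m (∑ i ∈ Finset.range N, c i * φ ^ i) = if m < N then c m else 0 := by
  have hterm : ∀ i ∈ Finset.range N,
      phiDigit φ m (c i * φ ^ i) = if m = i then c i else 0 := by
    intro i hi
    rcases lt_or_ge m i with hmi | him
    · rw [phiDigit_mul_pow_of_lt hφ hmi, if_neg hmi.ne]
    · obtain ⟨j, rfl⟩ := Nat.exists_eq_add_of_le him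
      rw [phiDigit_add_mul_pow hφ, phiDigit_of_degree_lt hφ (hc i (Finset.mem_range.1 hi))]
      simp only [Nat.add_eq_left]
  simp only [map_sum, Finset.sum_congr rfl hterm, Finset.sum_ite_eq, Finset.mem_range]

theorem sum_phiDigit_mul_pow (hφ : φ.Monic) {N : ℕ} {p : R[X]}
    (hp : p.natDegree < N * φ.natDegree) :
    ∑ i ∈ Finset.range N, phiDigit φ i p * φ ^ i = p := by
  nontriviality R
  induction N generalizing p with
  | zero => simp at hp
  | succ N ih =>
    have hquot : ∑ i ∈ Finset.range N, phiDigit φ i (p /ₘ φ) * φ ^ i = p /ₘ φ := by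
      rcases lt_or_ge p.degree φ.degree with hlt | hge
      · simp only [(divByMonic_eq_zero_iff hφ).2 hlt, map_zero, zero_mul, Finset.sum_const_zero]
      · have hle := natDegree_le_natDegree hge
        refine ih ?_
        rw [natDegree_divByMonic _ hφ]
        rw [add_one_mul] at hp
        lia
    simp only [Finset.sum_range_succ', phiDigit_succ_apply, pow_succ, ← mul_assoc,
      ← Finset.sum_mul, hquot, phiDigit_zero_apply, pow_zero, mul_one]
    rw [add_comm, mul_comm, modByMonic_add_div]

theorem mul_eq_sum_phiDigit_mul_phiDigit (hφ : φ.Monic) {N : ℕ} {g h : R[X]}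
    (hg : g.natDegree < N * φ.natDegree) (hh : h.natDegree < N * φ.natDegree) :
    g * h = ∑ x ∈ Finset.range N ×ˢ Finset.range N,
      phiDigit φ x.1 g * phiDigit φ x.2 h * φ ^ (x.1 + x.2) := by
  conv_lhs => rw [← sum_phiDigit_mul_pow hφ hg, ← sum_phiDigit_mul_pow hφ hh,
    Finset.sum_mul_sum, ← Finset.sum_product']
  exact Finset.sum_congr rfl fun x _ => by rw [mul_mul_mul_comm, pow_add]

theorem exists_not_dvd_phiDigit (hφ : φ.Monic) {N : ℕ} {q p : R[X]}
    (hp : p.natDegree < N * φ.natDegree) (hqp : ¬ q ∣ p) :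
    ∃ t < N, ¬ q ∣ phiDigit φ t p := by
  contrapose! hqp
  rw [← sum_phiDigit_mul_pow hφ hp]
  exact Finset.dvd_sum fun i hi => (hqp i (Finset.mem_range.1 hi)).mul_right _

end PhiExpansion

section GaussValuation

variable {R : Type*} [CommRing R] {π : R} {φ : R[X]}

theorem emultiplicity_C_le_linearMap (L : R[X] →ₗ[R] R[X]) (p : R[X]) :
    emultiplicity (C π) p ≤ emultiplicity (C π) (L p) := by
  refine emultiplicity_le_emultiplicity_iff.2 fun s ⟨q, hq⟩ => ⟨L q, ?_⟩
  rw [hq, ← C_pow, ← smul_eq_C_mul, map_smul, smul_eq_C_mul]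

theorem C_dvd_linearMap (L : R[X] →ₗ[R] R[X]) {p : R[X]} (hp : C π ∣ p) : C π ∣ L p :=
  dvd_of_emultiplicity_pos <|
    (emultiplicity_pos_of_dvd hp).trans_le (emultiplicity_C_le_linearMap L p)

theorem not_C_dvd_sum_mul_pow (hφ : φ.Monic) {c : ℕ → R[X]} {N m : ℕ}
    (hc : ∀ i < N, (c i).degree < φ.degree) (hm : m < N) (hcm : ¬ C π ∣ c m) :
    ¬ C π ∣ ∑ i ∈ Finset.range N, c i * φ ^ i := fun hdvd => hcm <| by
  simpa only [phiDigit_sum_mul_pow hφ hc, if_pos hm] using C_dvd_linearMap (phiDigit φ m) hdvd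

variable {S : Type*} [CommRing S] {ρ : R →+* S}

theorem C_dvd_iff_map_eq_zero (hρ : RingHom.ker ρ = Ideal.span {π}) (p : R[X]) :
    C π ∣ p ↔ p.map ρ = 0 := by
  simp only [C_dvd_iff_dvd_coeff, Polynomial.ext_iff, coeff_map, coeff_zero, ← RingHom.mem_ker, hρ,
    Ideal.mem_span_singleton]

theorem C_dvd_modByMonic_iff (hρ : RingHom.ker ρ = Ideal.span {π}) (hφ : φ.Monic) (p : R[X]) :
    C π ∣ p %ₘ φ ↔ φ.map ρ ∣ p.map ρ := by
  rw [C_dvd_iff_map_eq_zero hρ, map_modByMonic _ hφ, modByMonic_eq_zero_iff_dvd (hφ.map ρ)]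

theorem not_map_dvd_map_of_degree_lt [Nontrivial R] (hρ : RingHom.ker ρ = Ideal.span {π})
    (hφ : φ.Monic) {p : R[X]} (hp : p.degree < φ.degree) (hπp : ¬ C π ∣ p) :
    ¬ φ.map ρ ∣ p.map ρ := by
  rwa [← C_dvd_modByMonic_iff hρ hφ, (modByMonic_eq_self_iff hφ).2 hp]

theorem natDegree_pos_of_prime_map (hφ : φ.Monic) (hφρ : Prime (φ.map ρ)) :
    0 < φ.natDegree := by
  refine Nat.pos_of_ne_zero fun hdeg => hφρ.not_isUnit ?_
  rw [hφ.natDegree_eq_zero.1 hdeg, Polynomial.map_one]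
  exact isUnit_one

variable [IsDomain R]

theorem exists_eq_C_pow_mul_and_not_dvd (hπ : π ≠ 0) {p : R[X]}
    (hp : FiniteMultiplicity (C π) p) :
    ∃ s q, p = C π ^ s * q ∧ ¬ C π ∣ q ∧ q.degree = p.degree := by
  obtain ⟨q, hpq, hq⟩ := hp.exists_eq_pow_mul_and_not_dvd
  refine ⟨_, q, hpq, hq, ?_⟩
  conv_rhs => rw [hpq, ← C_pow, degree_C_mul (pow_ne_zero _ hπ)]

theorem emultiplicity_mul_modByMonic (hπ : Prime π) (hρ : RingHom.ker ρ = Ideal.span {π})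
    (hφ : φ.Monic) (hφρ : Prime (φ.map ρ)) {p q : R[X]} (hp : p.degree < φ.degree)
    (hq : q.degree < φ.degree) :
    emultiplicity (C π) ((p * q) %ₘ φ) = emultiplicity (C π) p + emultiplicity (C π) q := by
  have hCπ : Prime (C π) := prime_C_iff.2 hπ
  rw [← emultiplicity_mul hCπ]
  by_cases hfin : FiniteMultiplicity (C π) (p * q)
  · obtain ⟨s, p, rfl, hπp, hdegp⟩ := exists_eq_C_pow_mul_and_not_dvd hπ.ne_zero hfin.mul_left
    obtain ⟨t, q, rfl, hπq, hdegq⟩ := exists_eq_C_pow_mul_and_not_dvd hπ.ne_zero hfin.mul_right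
    have hπpq : ¬ C π ∣ p * q := hCπ.not_dvd_mul hπp hπq
    have hmod : ¬ C π ∣ (p * q) %ₘ φ := by
      rw [C_dvd_modByMonic_iff hρ hφ, Polynomial.map_mul]
      exact hφρ.not_dvd_mul (not_map_dvd_map_of_degree_lt hρ hφ (hdegp.trans_lt hp) hπp)
        (not_map_dvd_map_of_degree_lt hρ hφ (hdegq.trans_lt hq) hπq)
    have hpull : (C π ^ s * p * (C π ^ t * q)) %ₘ φ = C π ^ (s + t) * ((p * q) %ₘ φ) := by
      rw [mul_mul_mul_comm, ← pow_add, ← C_pow, ← smul_eq_C_mul, smul_modByMonic, smul_eq_C_mul]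
    rw [hpull, mul_mul_mul_comm, ← pow_add, emultiplicity_mul hCπ, emultiplicity_mul hCπ,
      emultiplicity_eq_zero.2 hmod, emultiplicity_eq_zero.2 hπpq]
  · have htop : emultiplicity (C π) (p * q) = ⊤ := emultiplicity_eq_top.2 hfin
    rw [htop, eq_top_iff, ← htop]
    exact emultiplicity_C_le_linearMap (modByMonicHom φ) _

end GaussValuation

section NewtonVertex

variable {R : Type*} [CommRing R] {π : R} {φ : R[X]} {k : ℕ}

/-- The weight `k * v + i` of the `i`-th point of the `φ`-Newton polygon of `p`, where `v` is the
`π`-adic Gauss valuation of the `i`-th coefficient of the `φ`-expansion: `k` times the height at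
which the line of slope `-1 / k` through `(i, v)` meets the vertical axis. For `k ≠ 0` it is `⊤`
when that coefficient vanishes. -/
noncomputable def phiWeight (π : R) (φ : R[X]) (k : ℕ) (p : R[X]) (i : ℕ) : ℕ∞ :=
  k * emultiplicity (C π) (phiDigit φ i p) + i

theorem phiWeight_eq_top (hk : k ≠ 0) {p : R[X]} {i : ℕ} (hp : phiDigit φ i p = 0) :
    phiWeight π φ k p i = ⊤ := by
  rw [phiWeight, hp, emultiplicity_zero, ENat.mul_top (Nat.cast_ne_zero.2 hk), top_add]

theorem phiWeight_of_not_dvd {p : R[X]} {i : ℕ} (hp : ¬ C π ∣ phiDigit φ i p) :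
    phiWeight π φ k p i = i := by
  rw [phiWeight, emultiplicity_eq_zero.2 hp, mul_zero, zero_add]

theorem min_phiWeight_le_phiWeight_add (p q : R[X]) (i : ℕ) :
    min (phiWeight π φ k p i) (phiWeight π φ k q i) ≤ phiWeight π φ k (p + q) i := by
  have hmono : Monotone fun e : ℕ∞ => k * e + i := fun _ _ hab => by dsimp only; gcongr
  simp only [phiWeight, map_add, ← hmono.map_min]
  exact hmono min_le_emultiplicity_add

theorem le_phiWeight_sum (hk : k ≠ 0) {ι : Type*} {s : Finset ι} {p : ι → R[X]} {i : ℕ} {w : ℕ∞}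
    (hp : ∀ x ∈ s, w ≤ phiWeight π φ k (p x) i) : w ≤ phiWeight π φ k (∑ x ∈ s, p x) i :=
  Finset.sum_induction _ (w ≤ phiWeight π φ k · i)
    (fun _ _ ha hb => (le_min ha hb).trans (min_phiWeight_le_phiWeight_add _ _ _))
    (phiWeight_eq_top (π := π) (φ := φ) hk (map_zero _) ▸ le_top) hp

theorem lt_phiWeight_sum (hk : k ≠ 0) {ι : Type*} {s : Finset ι} {p : ι → R[X]} {i : ℕ} {w : ℕ∞}
    (hw : w < ⊤) (hp : ∀ x ∈ s, w < phiWeight π φ k (p x) i) :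
    w < phiWeight π φ k (∑ x ∈ s, p x) i :=
  Finset.sum_induction _ (w < phiWeight π φ k · i)
    (fun _ _ ha hb => (lt_min ha hb).trans_le (min_phiWeight_le_phiWeight_add _ _ _))
    (phiWeight_eq_top (π := π) (φ := φ) hk (map_zero _) ▸ hw) hp

theorem phiWeight_add_eq_left {p q : R[X]} {i : ℕ}
    (hpq : phiWeight π φ k p i < phiWeight π φ k q i) :
    phiWeight π φ k (p + q) i = phiWeight π φ k p i := by
  have hlt : emultiplicity (C π) (phiDigit φ i p) < emultiplicity (C π) (phiDigit φ i q) := by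
    contrapose! hpq
    unfold phiWeight
    gcongr
  rw [phiWeight, map_add, add_comm (phiDigit φ i p), emultiplicity_add_of_gt hlt, phiWeight]

/-- `α` is the largest index at which `phiWeight π φ k p` attains its minimum: the rightmost point
of the `φ`-Newton polygon of `p` on its supporting line of slope `-1 / k`. The strict inequality
beyond `α` forces the minimum to be finite. -/
structure IsNewtonVertex (π : R) (φ : R[X]) (k : ℕ) (p : R[X]) (α : ℕ) : Prop where
  le : ∀ i, phiWeight π φ k p α ≤ phiWeight π φ k p i
  lt : ∀ i, α < i → phiWeight π φ k p α < phiWeight π φ k p i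

namespace IsNewtonVertex

theorem lt_top {p : R[X]} {α : ℕ} (hα : IsNewtonVertex π φ k p α) : phiWeight π φ k p α < ⊤ :=
  (hα.lt _ α.lt_succ_self).trans_le le_top

theorem unique {p : R[X]} {α β : ℕ} (hα : IsNewtonVertex π φ k p α)
    (hβ : IsNewtonVertex π φ k p β) : α = β :=
  le_antisymm (not_lt.1 fun hlt => (hβ.lt α hlt).not_ge (hα.le β))
    (not_lt.1 fun hlt => (hα.lt β hlt).not_ge (hβ.le α))

end IsNewtonVertex

theorem exists_isNewtonVertex {p : R[X]} {t : ℕ} (ht : phiWeight π φ k p t < ⊤) :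
    ∃ α, IsNewtonVertex π φ k p α := by
  obtain ⟨_, ⟨b, rfl⟩, hmin⟩ := wellFounded_lt.has_min (Set.range (phiWeight π φ k p))
    (Set.range_nonempty _)
  replace hmin : ∀ i, phiWeight π φ k p b ≤ phiWeight π φ k p i := fun i =>
    not_lt.1 (hmin _ (Set.mem_range_self i))
  obtain ⟨M, hM⟩ := ENat.ne_top_iff_exists.1 ((hmin t).trans_lt ht).ne
  -- The weight at `i` is at least `i`, so a finite minimum is attained finitely often.
  have hfin : {i | phiWeight π φ k p i = phiWeight π φ k p b}.Finite :=
    (Set.finite_Iic M).subset fun i (hi : _ = _) =>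
      Nat.cast_le.1 ((le_add_self : (i : ℕ∞) ≤ phiWeight π φ k p i).trans (hi.trans hM.symm).le)
  obtain ⟨α, hα, hmax⟩ := Set.exists_max_image _ id hfin ⟨b, rfl⟩
  refine ⟨α, fun i => hα.trans_le (hmin i), fun i hi => hα.trans_lt ((hmin i).lt_of_ne ?_)⟩
  exact fun heq => (hmax i heq.symm).not_gt hi

theorem exists_isNewtonVertex_of_not_dvd (hφ : φ.Monic) (hdeg : 0 < φ.natDegree) {p : R[X]}
    (hp : ¬ C π ∣ p) : ∃ α, IsNewtonVertex π φ k p α := by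
  obtain ⟨t, -, ht⟩ := exists_not_dvd_phiDigit (N := p.natDegree + 1) hφ
    (p.natDegree.lt_succ_self.trans_le (Nat.le_mul_of_pos_right _ hdeg)) hp
  exact exists_isNewtonVertex (t := t) (phiWeight_of_not_dvd ht ▸ ENat.natCast_lt_top t)

theorem isNewtonVertex_zero_sum_mul_pow (hk : k ≠ 0) (hφ : φ.Monic) {c : ℕ → R[X]} {n : ℕ}
    (hc : ∀ i < n + 1, (c i).degree < φ.degree) (hn : n ≠ 0)
    (hlt : ∀ j, 1 ≤ j → j ≤ n →
      k * emultiplicity (C π) (c 0) < k * emultiplicity (C π) (c j) + j) :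
    IsNewtonVertex π φ k (∑ i ∈ Finset.range (n + 1), c i * φ ^ i) 0 := by
  have hpos : ∀ j, 0 < j → phiWeight π φ k (∑ i ∈ Finset.range (n + 1), c i * φ ^ i) 0 <
      phiWeight π φ k (∑ i ∈ Finset.range (n + 1), c i * φ ^ i) j := by
    intro j hj
    simp only [phiWeight, phiDigit_sum_mul_pow hφ hc, if_pos n.succ_pos, Nat.cast_zero, add_zero]
    split_ifs with hjn
    · exact hlt j hj (Nat.lt_succ_iff.1 hjn)
    · rw [emultiplicity_zero, ENat.mul_top (Nat.cast_ne_zero.2 hk), top_add]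
      exact (hlt n (Nat.one_le_iff_ne_zero.2 hn) le_rfl).trans_le le_top
  exact ⟨fun j => j.eq_zero_or_pos.elim (fun hj => hj ▸ le_rfl) fun hj => (hpos j hj).le, hpos⟩

variable [IsDomain R] {S : Type*} [CommRing S] {ρ : R →+* S} {g h : R[X]} {α β : ℕ}

theorem phiWeight_add_phiWeight_add_le (hk : k ≠ 0) (hπ : Prime π) (hφ : φ.Monic) (i j m : ℕ) :
    phiWeight π φ k g i + phiWeight π φ k h j + (m - (i + j) : ℕ) ≤
      phiWeight π φ k (phiDigit φ i g * phiDigit φ j h * φ ^ (i + j)) m := by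
  rcases lt_or_ge m (i + j) with hlt | hge
  · rw [phiWeight_eq_top hk (phiDigit_mul_pow_of_lt hφ hlt _)]
    exact le_top
  obtain ⟨r, rfl⟩ := Nat.exists_eq_add_of_le hge
  have hmul := emultiplicity_C_le_linearMap (π := π) (phiDigit φ r)
    (phiDigit φ i g * phiDigit φ j h)
  rw [emultiplicity_mul (prime_C_iff.2 hπ)] at hmul
  calc _ = k * (emultiplicity (C π) (phiDigit φ i g) + emultiplicity (C π) (phiDigit φ j h))
        + (i + j + r : ℕ) := by
        rw [phiWeight, phiWeight, Nat.add_sub_cancel_left]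
        push_cast
        ring
    _ ≤ _ := by
      rw [phiWeight, phiDigit_add_mul_pow hφ]
      gcongr

theorem phiWeight_digit_mul_digit (hπ : Prime π) (hρ : RingHom.ker ρ = Ideal.span {π})
    (hφ : φ.Monic) (hφρ : Prime (φ.map ρ)) (i j : ℕ) :
    phiWeight π φ k (phiDigit φ i g * phiDigit φ j h * φ ^ (i + j)) (i + j) =
      phiWeight π φ k g i + phiWeight π φ k h j := by
  rw [phiWeight, phiDigit_mul_pow_self hφ, emultiplicity_mul_modByMonic hπ hρ hφ hφρ
    (degree_phiDigit_lt hφ _ _) (degree_phiDigit_lt hφ _ _), phiWeight, phiWeight]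
  push_cast
  ring

namespace IsNewtonVertex

theorem lt_phiWeight_digit_mul_digit (hk : k ≠ 0) (hπ : Prime π) (hφ : φ.Monic)
    (hα : IsNewtonVertex π φ k g α) (hβ : IsNewtonVertex π φ k h β) {i j m : ℕ}
    (hij : α < i ∨ β < j ∨ i + j < m) :
    phiWeight π φ k g α + phiWeight π φ k h β <
      phiWeight π φ k (phiDigit φ i g * phiDigit φ j h * φ ^ (i + j)) m := by
  refine lt_of_lt_of_le ?_ (phiWeight_add_phiWeight_add_le hk hπ hφ i j m)
  rcases hij with hi | hj | hm
  · exact (ENat.add_lt_add_of_lt_of_le hβ.lt_top.ne (hα.lt i hi) (hβ.le j)).trans_le le_self_add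
  · exact (ENat.add_lt_add_of_le_of_lt hα.lt_top.ne (hα.le i) (hβ.lt j hj)).trans_le le_self_add
  · have hpos : (0 : ℕ∞) < (m - (i + j) : ℕ) := Nat.cast_pos.2 (Nat.sub_pos_of_lt hm)
    simpa only [add_zero] using ENat.add_lt_add_of_le_of_lt
      (ENat.add_lt_top.2 ⟨hα.lt_top, hβ.lt_top⟩).ne (add_le_add (hα.le i) (hβ.le j)) hpos

theorem mul (hk : k ≠ 0) (hπ : Prime π) (hρ : RingHom.ker ρ = Ideal.span {π}) (hφ : φ.Monic)
    (hφρ : Prime (φ.map ρ)) (hα : IsNewtonVertex π φ k g α) (hβ : IsNewtonVertex π φ k h β) :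
    IsNewtonVertex π φ k (g * h) (α + β) := by
  obtain ⟨N, hgN, hhN, hαN, hβN⟩ : ∃ N, g.natDegree < N * φ.natDegree ∧
      h.natDegree < N * φ.natDegree ∧ α < N ∧ β < N := by
    have hle := Nat.le_mul_of_pos_right (g.natDegree + h.natDegree + α + β + 1)
      (natDegree_pos_of_prime_map hφ hφρ)
    exact ⟨g.natDegree + h.natDegree + α + β + 1, by lia, by lia, by lia, by lia⟩
  set term : ℕ × ℕ → R[X] := fun x => phiDigit φ x.1 g * phiDigit φ x.2 h * φ ^ (x.1 + x.2)
  have hgh : g * h = ∑ x ∈ Finset.range N ×ˢ Finset.range N, term x :=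
    mul_eq_sum_phiDigit_mul_phiDigit hφ hgN hhN
  have hmem : (α, β) ∈ Finset.range N ×ˢ Finset.range N :=
    Finset.mk_mem_product (Finset.mem_range.2 hαN) (Finset.mem_range.2 hβN)
  have htop : phiWeight π φ k g α + phiWeight π φ k h β < ⊤ :=
    ENat.add_lt_top.2 ⟨hα.lt_top, hβ.lt_top⟩
  have hvertex : phiWeight π φ k (g * h) (α + β) =
      phiWeight π φ k g α + phiWeight π φ k h β := by
    rw [← phiWeight_digit_mul_digit hπ hρ hφ hφρ, hgh, ← Finset.add_sum_erase _ _ hmem]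
    refine phiWeight_add_eq_left ?_
    rw [phiWeight_digit_mul_digit hπ hρ hφ hφρ]
    refine lt_phiWeight_sum hk htop fun x hx => lt_phiWeight_digit_mul_digit hk hπ hφ hα hβ ?_
    have hne : ¬ (x.1 = α ∧ x.2 = β) := fun hx' => Finset.ne_of_mem_erase hx (Prod.ext hx'.1 hx'.2)
    lia
  refine ⟨fun m => ?_, fun m hm => ?_⟩ <;> rw [hvertex, hgh]
  · exact le_phiWeight_sum hk fun x _ => (add_le_add (hα.le _) (hβ.le _)).trans
      (le_self_add.trans (phiWeight_add_phiWeight_add_le hk hπ hφ _ _ m))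
  · exact lt_phiWeight_sum hk htop fun x _ =>
      lt_phiWeight_digit_mul_digit hk hπ hφ hα hβ (by lia)

theorem le_natDegree_of_map_dvd (hk : k ≠ 0) (hπ : Prime π) (hρ : RingHom.ker ρ = Ideal.span {π})
    (hφ : φ.Monic) (hφρ : Prime (φ.map ρ)) (hgh : IsNewtonVertex π φ k (g * h) 0)
    (hπgh : ¬ C π ∣ g * h) (hφg : φ.map ρ ∣ g.map ρ) :
    (k + 1) * φ.natDegree ≤ g.natDegree := by
  by_contra! hlt
  have hdeg := natDegree_pos_of_prime_map hφ hφρ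
  have hπg : ¬ C π ∣ g := fun hdvd => hπgh (hdvd.mul_right h)
  have hπh : ¬ C π ∣ h := fun hdvd => hπgh (hdvd.mul_left g)
  have hg₀ : C π ∣ phiDigit φ 0 g := (C_dvd_modByMonic_iff hρ hφ g).2 hφg
  obtain ⟨t, htk, ht⟩ := exists_not_dvd_phiDigit hφ hlt hπg
  obtain ⟨α, hα⟩ := exists_isNewtonVertex_of_not_dvd (k := k) hφ hdeg hπg
  obtain ⟨β, hβ⟩ := exists_isNewtonVertex_of_not_dvd (k := k) hφ hdeg hπh
  obtain rfl : α = 0 := (add_eq_zero.1 ((hα.mul hk hπ hρ hφ hφρ hβ).unique hgh)).1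
  have ht₀ : 0 < t := Nat.pos_of_ne_zero fun ht₀ => ht (ht₀ ▸ hg₀)
  have hweight : (k : ℕ∞) ≤ phiWeight π φ k g 0 := by
    rw [phiWeight, Nat.cast_zero, add_zero]
    exact le_mul_of_one_le_right' (Order.one_le_iff_ne_zero.2 (emultiplicity_ne_zero.2 hg₀))
  have hkt := hweight.trans_lt ((hα.lt t ht₀).trans_eq (phiWeight_of_not_dvd ht))
  exact (Nat.cast_lt.1 hkt).not_ge (Nat.lt_succ_iff.1 htk)

end IsNewtonVertex

end NewtonVertex

section Residue

variable {R S : Type*} [CommRing R] [CommRing S] {ρ : R →+* S}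

theorem dvd_of_prime_pow_dvd_mul_of_natDegree_lt [IsDomain S] {P a b : S[X]} (hP : Prime P) {N : ℕ}
    (hdvd : P ^ N ∣ a * b) (hb : b ≠ 0) (hdeg : b.natDegree < N * P.natDegree) : P ∣ a := by
  by_contra hPa
  have hle := natDegree_le_of_dvd (hP.pow_dvd_of_dvd_mul_left N hPa hdvd) hb
  rw [natDegree_pow] at hle
  exact hle.not_gt hdeg

theorem map_dvd_map_of_le_natDegree [IsDomain R] [IsDomain S] {φ g h : R[X]} (hφ : φ.Monic)
    (hφρ : Prime (φ.map ρ)) {n ℓ : ℕ} (hgh : (g * h).map ρ ≠ 0)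
    (hdvd : φ.map ρ ^ (n - ℓ) ∣ (g * h).map ρ)
    (hdeg : (g * h).natDegree < (n + 1) * φ.natDegree)
    (hg : (ℓ + 1) * φ.natDegree ≤ g.natDegree) : φ.map ρ ∣ g.map ρ := by
  rw [Polynomial.map_mul] at hgh hdvd
  have hh : (h.map ρ).natDegree < (n - ℓ) * φ.natDegree := by
    have hne : g * h ≠ 0 := fun h0 => hgh (by rw [← Polynomial.map_mul, h0, Polynomial.map_zero])
    rw [natDegree_mul (left_ne_zero_of_mul hne) (right_ne_zero_of_mul hne)] at hdeg
    refine natDegree_map_le.trans_lt ?_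
    rw [Nat.sub_mul]
    lia
  exact dvd_of_prime_pow_dvd_mul_of_natDegree_lt hφρ hdvd (right_ne_zero_of_mul hgh)
    (by rwa [hφ.natDegree_map])

theorem map_pow_dvd_map_sum_mul_pow {φ : R[X]} {c : ℕ → R[X]} {N r : ℕ}
    (hc : ∀ i < r, (c i).map ρ = 0) :
    φ.map ρ ^ r ∣ (∑ i ∈ Finset.range N, c i * φ ^ i).map ρ := by
  simp only [Polynomial.map_sum, Polynomial.map_mul, Polynomial.map_pow]
  refine Finset.dvd_sum fun i _ => ?_
  rcases lt_or_ge i r with hir | hri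
  · rw [hc i hir, zero_mul]
    exact dvd_zero _
  · exact (pow_dvd_pow _ hri).mul_left _

theorem map_ne_zero_of_isUnit_leadingCoeff [Nontrivial S] {p : R[X]} (hp : IsUnit p.leadingCoeff) :
    p.map ρ ≠ 0 := fun h0 => (hp.map ρ).ne_zero <| by
  rw [leadingCoeff, ← coeff_map, h0, coeff_zero]

end Residue

section DiscreteValuationRing

variable {R : Type*} [CommRing R]

theorem map_residue_eq_zero_iff [IsLocalRing R] {p : R[X]} :
    p.map (IsLocalRing.residue R) = 0 ↔ ∀ j, p.coeff j ∈ IsLocalRing.maximalIdeal R := by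
  simp only [Polynomial.ext_iff, coeff_map, coeff_zero, IsLocalRing.residue_eq_zero_iff]

variable [IsDomain R] [IsDiscreteValuationRing R] {π : R}

theorem vxDVR_eq_emultiplicity (hπ : Irreducible π) {p : R[X]} (hp : p ≠ 0) :
    (vxDVR R p : ℕ∞) = emultiplicity (C π) p := by
  have hfin : FiniteMultiplicity (C π) p :=
    FiniteMultiplicity.of_prime_left (prime_C_iff.2 hπ.prime) hp
  have hset : {m : ℕ | ∀ j, p.coeff j ∈ IsLocalRing.maximalIdeal R ^ m} =
      Set.Iic (multiplicity (C π) p) := by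
    ext m
    simp only [Set.mem_ofPred_eq, Set.mem_Iic, ← hfin.pow_dvd_iff_le_multiplicity, ← C_pow,
      C_dvd_iff_dvd_coeff, hπ.maximalIdeal_eq, Ideal.span_singleton_pow, Ideal.mem_span_singleton]
  rw [vxDVR, hset, csSup_Iic, hfin.emultiplicity_eq_multiplicity]

theorem mul_emultiplicity_lt_of_mul_vxDVR_sub_lt (hπ : Irreducible π) {p q : R[X]} (hp : p ≠ 0)
    {k j : ℕ} (hk : k ≠ 0) (hj : q ≠ 0 → k * (vxDVR R p - vxDVR R q) < j) :
    k * emultiplicity (C π) p < k * emultiplicity (C π) q + j := by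
  rw [← vxDVR_eq_emultiplicity hπ hp]
  by_cases hq : q = 0
  · rw [hq, emultiplicity_zero, ENat.mul_top (Nat.cast_ne_zero.2 hk), top_add]
    exact ENat.natCast_lt_top (k * vxDVR R p)
  · have hlt := hj hq
    rw [Nat.mul_sub] at hlt
    rw [← vxDVR_eq_emultiplicity hπ hq]
    exact_mod_cast (by lia : k * vxDVR R p < k * vxDVR R q + j)

end DiscreteValuationRing

theorem filaseta_extension_dvr_general {R S : Type*} [CommRing R] [IsDomain R] [CommRing S]
    [IsDomain S] {ρ : R →+* S} {π : R} (hπ : π ≠ 0) (hρ : RingHom.ker ρ = Ideal.span {π})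
    {n k ℓ : ℕ} {φ : R[X]} (hφ : φ.Monic) (hφρ : Prime (φ.map ρ)) {f a : ℕ → R[X]}
    (hdeg : ∀ i ≤ n, (a i).degree + (f i).degree < φ.degree)
    (hlow : ∀ i < n - ℓ, (f i).map ρ = 0)
    (hnewton : ∀ j, 1 ≤ j → j ≤ n →
      k * emultiplicity (C π) (f 0) < k * emultiplicity (C π) (f j) + j)
    (hfn : (f n).map ρ ≠ 0) (ha₀ : (a 0).map ρ ≠ 0) (han : (a n).map ρ ≠ 0) (g : R[X])
    (hg : g ∣ ∑ i ∈ Finset.range (n + 1), a i * f i * φ ^ i) :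
    ¬ ((ℓ + 1) * φ.natDegree ≤ g.natDegree ∧ g.natDegree < (k + 1) * φ.natDegree) := by
  rintro ⟨hℓg, hgk⟩
  obtain ⟨h, hF⟩ := hg
  have hπ' : Prime π := (Ideal.span_singleton_prime hπ).1 (hρ ▸ RingHom.ker_isPrime ρ)
  have hCπ : Prime (C π) := prime_C_iff.2 hπ'
  have hc : ∀ i < n + 1, (a i * f i).degree < φ.degree := fun i hi =>
    (degree_mul_le _ _).trans_lt (hdeg i (Nat.lt_succ_iff.1 hi))
  have hπF : ¬ C π ∣ g * h := hF ▸ not_C_dvd_sum_mul_pow hφ hc n.lt_succ_self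
    (hCπ.not_dvd_mul (mt (C_dvd_iff_map_eq_zero hρ _).1 han)
      (mt (C_dvd_iff_map_eq_zero hρ _).1 hfn))
  have hF₀ : g * h ≠ 0 := fun h0 => hπF (h0 ▸ dvd_zero _)
  have hFdeg : (g * h).natDegree < (n + 1) * φ.natDegree := by
    rw [natDegree_lt_iff_degree_lt hF₀, ← hF]
    exact degree_sum_mul_pow_lt hφ hc
  have hℓn : ℓ < n := Nat.lt_of_succ_lt_succ <| Nat.lt_of_mul_lt_mul_right <|
    (hℓg.trans (natDegree_le_of_dvd (dvd_mul_right g h) hF₀)).trans_lt hFdeg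
  have hℓk : ℓ < k := Nat.lt_of_succ_lt_succ <| Nat.lt_of_mul_lt_mul_right <| hℓg.trans_lt hgk
  have hvertex : IsNewtonVertex π φ k (g * h) 0 := by
    rw [← hF]
    refine isNewtonVertex_zero_sum_mul_pow (Nat.ne_zero_of_lt hℓk) hφ hc
      (Nat.ne_zero_of_lt hℓn) fun j hj hjn => ?_
    rw [emultiplicity_mul hCπ, emultiplicity_mul hCπ,
      emultiplicity_eq_zero.2 (mt (C_dvd_iff_map_eq_zero hρ _).1 ha₀), zero_add]
    refine (hnewton j hj hjn).trans_le ?_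
    gcongr
    exact le_add_self
  have hφg : φ.map ρ ∣ g.map ρ := by
    refine map_dvd_map_of_le_natDegree hφ hφρ (mt (C_dvd_iff_map_eq_zero hρ _).2 hπF) ?_ hFdeg hℓg
    rw [← hF]
    exact map_pow_dvd_map_sum_mul_pow fun i hi => by rw [Polynomial.map_mul, hlow i hi, mul_zero]
  exact (hvertex.le_natDegree_of_map_dvd (Nat.ne_zero_of_lt hℓk) hπ' hρ hφ hφρ hπF hφg).not_gt hgk

/-- Filaseta's lemma, extended, over a discrete valuation ring `R` with residue field `κ`:
let `0 ≤ ℓ < k ≤ n/2`, `φ ∈ R[x]` monic with irreducible image in `κ[x]`, `f ∈ R[x]` monic,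
not divisible by `φ`, with `φ`-expansion `f = ∑_{i≤n} (fc i)·φ^i`, `fc n ≠ 0`. Assume
`v^x(fc i) > 0` for `i ≤ n-ℓ-1` and `k·(v^x(fc 0) - v^x(fc j)) < j` whenever `1 ≤ j ≤ n`
and `fc j ≠ 0`. If `deg (a i) < deg φ - deg (fc i)`, `v^x(a 0) = 0` (some coefficient of
`a 0` is outside the maximal ideal), and the leading coefficient of `a n` is a unit, then
`∑_{i≤n} (a i)·(fc i)·φ^i` has no factor in `R[x]` of degree in
`[(ℓ+1)·deg φ, (k+1)·deg φ)`. -/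
theorem filaseta_extension_dvr (R : Type*) [CommRing R] [IsDomain R]
    [IsDiscreteValuationRing R]
    (n k ℓ : ℕ) (hℓk : ℓ < k) (hk : 2 * k ≤ n)
    (φ : Polynomial R) (hφmonic : φ.Monic)
    (hφirr : Irreducible (φ.map (IsLocalRing.residue R)))
    (f : Polynomial R) (hfmonic : f.Monic) (hφf : ¬ φ ∣ f)
    (fc : ℕ → Polynomial R)
    (hexp : f = ∑ i ∈ Finset.range (n + 1), fc i * φ ^ i)
    (hdegfc : ∀ i, (fc i).degree < φ.degree)
    (hfn : fc n ≠ 0)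
    (h1 : ∀ i ≤ n - ℓ - 1, ∀ j, (fc i).coeff j ∈ IsLocalRing.maximalIdeal R)
    (hf0 : fc 0 ≠ 0)
    (h2 : ∀ j, 1 ≤ j → j ≤ n → fc j ≠ 0 → k * (vxDVR R (fc 0) - vxDVR R (fc j)) < j)
    (a : ℕ → Polynomial R)
    (hadeg : ∀ i ≤ n, (a i).degree + (fc i).degree < φ.degree)
    (ha0 : ∃ j, (a 0).coeff j ∉ IsLocalRing.maximalIdeal R)
    (han : IsUnit (a n).leadingCoeff) :
    ∀ g : Polynomial R, g ∣ (∑ i ∈ Finset.range (n + 1), a i * fc i * φ ^ i) →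
      ¬ ((ℓ + 1) * φ.natDegree ≤ g.natDegree ∧
         g.natDegree < (k + 1) * φ.natDegree) := by
  obtain ⟨π, hπ⟩ := IsDiscreteValuationRing.exists_irreducible R
  have hlead : (fc n).leadingCoeff = 1 :=
    (leadingCoeff_sum_mul_pow hφmonic (fun i _ => hdegfc i) hfn).symm.trans (hexp ▸ hfmonic)
  exact filaseta_extension_dvr_general hπ.ne_zero (IsLocalRing.ker_residue.trans hπ.maximalIdeal_eq)
    hφmonic hφirr.prime hadeg
    (fun i hi => map_residue_eq_zero_iff.2 (h1 i (Nat.le_sub_one_of_lt hi)))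
    (fun j hj hjn => mul_emultiplicity_lt_of_mul_vxDVR_sub_lt hπ hf0 (Nat.ne_zero_of_lt hℓk)
      (h2 j hj hjn))
    (map_ne_zero_of_isUnit_leadingCoeff (hlead ▸ isUnit_one))
    (mt map_residue_eq_zero_iff.1 (not_forall.2 ha0)) (map_ne_zero_of_isUnit_leadingCoeff han)
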